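/- arXiv:2206.04152 — 6 statements merged into one kernel-verified Lean document; each statement's English description precedes it below -/
import Mathlib

section
/- Let X be a connected, locally compact, locally connected Hausdorff topological space and let C ⊆ X be compact. Then the union of C with all connected components of X \ C that have compact closure is a compact subset of X. -/
/-!
Let `K` be a compact neighbourhood of a nonempty closed compact set `C`. As `X` is connected, the
closure of every component of `Cᶜ` meets `C`, so the component meets `K` and, unless it lies inside
`K`, it crosses the frontier of `K`. The components of `Cᶜ` form a cover of this compact frontier by
pairwise disjoint open sets, so only finitely many of them leave `K`. Hence `K` and finitely many
compact closures cover the bounded components of `Cᶜ`. The union of these components with `C` is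
closed, its complement being a union of components of `Cᶜ`, which are open.

In an R₁ space a compact set `C` need not be closed, but every open set containing `C` contains
`closure C`, so `C` can be exchanged for `closure C` in a union without affecting compactness.
-/

open Set

section

variable {X : Type*} [TopologicalSpace X] {B C F K U V : Set X} {x y : X}

/-- The union of the bounded connected components of `U`, where a set is bounded if its closure
in the ambient space `X` (not in `U`) is compact. -/
def boundedPart (U : Set X) : Set X :=
  {x | x ∈ U ∧ IsCompact (closure (connectedComponentIn U x))}

theorem inter_boundedPart_subset_boundedPart (hUV : U ⊆ V) :
    U ∩ boundedPart V ⊆ boundedPart U := fun x hx =>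
  ⟨hx.1, hx.2.2.of_isClosed_subset isClosed_closure <|
    closure_mono (connectedComponentIn_mono x hUV)⟩

theorem mem_boundedPart_of_mem_connectedComponentIn (hyx : y ∈ connectedComponentIn U x)
    (hy : y ∈ boundedPart U) : x ∈ boundedPart U :=
  ⟨connectedComponentIn_nonempty_iff.1 ⟨y, hyx⟩, connectedComponentIn_eq hyx ▸ hy.2⟩

theorem boundedPart_univ_eq_empty [PreconnectedSpace X] [NoncompactSpace X] :
    boundedPart (univ : Set X) = ∅ := by
  ext x
  simp [boundedPart, connectedComponentIn_univ, PreconnectedSpace.connectedComponent_eq_univ,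
    noncompact_univ]

theorem closure_connectedComponentIn_inter (U : Set X) (x : X) :
    closure (connectedComponentIn U x) ∩ U = connectedComponentIn U x := by
  have hsub : connectedComponentIn U x ⊆ closure (connectedComponentIn U x) ∩ U :=
    subset_inter subset_closure (connectedComponentIn_subset U x)
  by_cases hx : x ∈ U
  · refine (IsPreconnected.subset_connectedComponentIn ?_
      (hsub (mem_connectedComponentIn hx)) inter_subset_right).antisymm hsub
    exact isPreconnected_connectedComponentIn.subset_closure hsub inter_subset_left
  · simp [connectedComponentIn_eq_empty hx]

theorem inter_frontier_nonempty_of_isPreconnected (hV : IsPreconnected V)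
    (hVK : (V ∩ K).Nonempty) (hVKc : (V ∩ Kᶜ).Nonempty) : (V ∩ frontier K).Nonempty := by
  by_contra hfrontier
  have hinterior : V ∩ K ⊆ interior K := fun z hz => by_contra fun hzi =>
    hfrontier ⟨z, hz.1, subset_closure hz.2, hzi⟩
  have hexterior : V ∩ Kᶜ ⊆ (closure K)ᶜ := fun z hz hzc =>
    hfrontier ⟨z, hz.1, hzc, fun hzi => hz.2 (interior_subset hzi)⟩
  obtain ⟨z, -, hzi, hzc⟩ := hV (interior K) (closure K)ᶜ isOpen_interior
    isClosed_closure.isOpen_compl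
    (fun z hz => (em (z ∈ K)).imp (fun h => hinterior ⟨hz, h⟩) fun h => hexterior ⟨hz, h⟩)
    (hVK.mono (subset_inter inter_subset_left hinterior))
    (hVKc.mono (subset_inter inter_subset_left hexterior))
  exact hzc (subset_closure (interior_subset hzi))

theorem isCompact_union_of_isCompact_closure_union [R1Space X] (hC : IsCompact C)
    (h : IsCompact (closure C ∪ B)) : IsCompact (C ∪ B) := by
  refine isCompact_of_finite_subcover fun W hW hcover => ?_
  have hCW : closure C ⊆ ⋃ i, W i :=
    hC.closure_subset_of_isOpen (isOpen_iUnion hW) (subset_union_left.trans hcover)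
  obtain ⟨t, ht⟩ :=
    h.elim_finite_subcover W hW (union_subset hCW (subset_union_right.trans hcover))
  exact ⟨t, (union_subset_union_left B subset_closure).trans ht⟩

section LocallyConnectedSpace

variable [LocallyConnectedSpace X]

theorem closure_connectedComponentIn_inter_compl_nonempty [PreconnectedSpace X] (hU : IsOpen U)
    (hne : U ≠ univ) (hx : x ∈ U) : (closure (connectedComponentIn U x) ∩ Uᶜ).Nonempty := by
  rw [inter_compl_nonempty_iff]
  intro hsub
  have hclosed : IsClosed (connectedComponentIn U x) := by
    rw [← closure_connectedComponentIn_inter, inter_eq_left.2 hsub]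
    exact isClosed_closure
  have huniv : connectedComponentIn U x = univ :=
    IsClopen.eq_univ ⟨hclosed, hU.connectedComponentIn⟩ ⟨x, mem_connectedComponentIn hx⟩
  exact hne (univ_subset_iff.1 (huniv ▸ connectedComponentIn_subset U x))

theorem connectedComponentIn_inter_frontier_nonempty [PreconnectedSpace X] (hU : IsOpen U)
    (hne : U ≠ univ) (hUK : Uᶜ ⊆ interior K) (hxK : x ∉ K) :
    (connectedComponentIn U x ∩ frontier K).Nonempty := by
  have hx : x ∈ U := by_contra fun hxU => hxK (interior_subset (hUK hxU))
  obtain ⟨z, hz, hzU⟩ := closure_connectedComponentIn_inter_compl_nonempty hU hne hx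
  obtain ⟨y, hyK, hy⟩ := mem_closure_iff.1 hz _ isOpen_interior (hUK hzU)
  exact inter_frontier_nonempty_of_isPreconnected isPreconnected_connectedComponentIn
    ⟨y, hy, interior_subset hyK⟩ ⟨x, mem_connectedComponentIn hx, hxK⟩

theorem finite_connectedComponentIn_image (hU : IsOpen U) (hF : IsCompact F) (hFU : F ⊆ U) :
    (connectedComponentIn U '' F).Finite := by
  obtain ⟨t, -, hFt⟩ := hF.elim_nhds_subcover (connectedComponentIn U) fun y hy =>
    hU.connectedComponentIn.mem_nhds (mem_connectedComponentIn (hFU hy))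
  refine (t.finite_toSet.image (connectedComponentIn U)).subset ?_
  rintro _ ⟨z, hz, rfl⟩
  obtain ⟨y, hyt, hzy⟩ := mem_iUnion₂.1 (hFt hz)
  exact ⟨y, hyt, connectedComponentIn_eq hzy⟩

theorem isCompact_biUnion_closure_connectedComponentIn (hU : IsOpen U) (hF : IsCompact F)
    (hFU : F ⊆ U) :
    IsCompact (⋃ y ∈ F ∩ boundedPart U, closure (connectedComponentIn U y)) := by
  have hfin : (connectedComponentIn U '' (F ∩ boundedPart U)).Finite :=
    (finite_connectedComponentIn_image hU hF hFU).subset (image_mono inter_subset_left)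
  rw [← biUnion_image (f := connectedComponentIn U) (g := closure)]
  exact hfin.isCompact_biUnion (forall_mem_image.2 fun y hy => hy.2.2)

theorem boundedPart_subset_union_biUnion_frontier [PreconnectedSpace X] (hU : IsOpen U)
    (hne : U ≠ univ) (hUK : Uᶜ ⊆ interior K) :
    boundedPart U ⊆
      K ∪ ⋃ y ∈ frontier K ∩ boundedPart U, closure (connectedComponentIn U y) := by
  intro x hx
  refine or_iff_not_imp_left.2 fun hxK => ?_
  obtain ⟨y, hyx, hyK⟩ := connectedComponentIn_inter_frontier_nonempty hU hne hUK hxK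
  have hxy : x ∈ connectedComponentIn U y :=
    connectedComponentIn_eq hyx ▸ mem_connectedComponentIn hx.1
  have hy : y ∈ boundedPart U := mem_boundedPart_of_mem_connectedComponentIn hxy hx
  exact mem_biUnion ⟨hyK, hy⟩ (subset_closure hxy)

theorem isClosed_closure_union_boundedPart_compl (C : Set X) :
    IsClosed (closure C ∪ boundedPart Cᶜ) := by
  have hsub : (closure C)ᶜ ⊆ Cᶜ := compl_subset_compl.2 subset_closure
  rw [← isOpen_compl_iff, isOpen_iff_mem_nhds]
  intro x hx
  obtain ⟨hxC, hxB⟩ := not_or.1 hx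
  have hnhds : connectedComponentIn (closure C)ᶜ x ∈ nhds x :=
    isClosed_closure.isOpen_compl.connectedComponentIn.mem_nhds (mem_connectedComponentIn hxC)
  refine Filter.mem_of_superset hnhds fun y hy => not_or.2 ⟨?_, fun hyB => hxB ?_⟩
  · exact connectedComponentIn_subset _ _ hy
  · exact mem_boundedPart_of_mem_connectedComponentIn (connectedComponentIn_mono x hsub hy) hyB

variable [PreconnectedSpace X] [WeaklyLocallyCompactSpace X] [R1Space X]

theorem isCompact_closure_boundedPart_compl_of_isClosed (hC : IsCompact C) (hclosed : IsClosed C) :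
    IsCompact (closure (boundedPart Cᶜ)) := by
  rcases C.eq_empty_or_nonempty with rfl | hne
  · by_cases hX : CompactSpace X
    · exact isClosed_closure.isCompact
    · have : NoncompactSpace X := not_compactSpace_iff.1 hX
      simp [boundedPart_univ_eq_empty]
  obtain ⟨K, hK, hCK⟩ := exists_compact_superset hC
  have hfrontier : IsCompact (frontier K) :=
    hK.closure.of_isClosed_subset isClosed_frontier frontier_subset_closure
  have hfrontierC : frontier K ⊆ Cᶜ := fun y hy hyC => hy.2 (hCK hyC)
  have hcover := boundedPart_subset_union_biUnion_frontier hclosed.isOpen_compl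
    (compl_ne_univ.2 hne) (by rwa [compl_compl])
  exact (hK.union (isCompact_biUnion_closure_connectedComponentIn hclosed.isOpen_compl
    hfrontier hfrontierC)).closure_of_subset hcover

theorem isCompact_closure_union_boundedPart_compl (hC : IsCompact C) :
    IsCompact (closure C ∪ boundedPart Cᶜ) := by
  have hsub : boundedPart Cᶜ ⊆ closure C ∪ boundedPart (closure C)ᶜ := fun x hx =>
    or_iff_not_imp_left.2 fun hxC =>
      inter_boundedPart_subset_boundedPart (compl_subset_compl.2 subset_closure) ⟨hxC, hx⟩
  have hbounded : IsCompact (closure (boundedPart (closure C)ᶜ)) :=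
    isCompact_closure_boundedPart_compl_of_isClosed hC.closure isClosed_closure
  exact (hC.closure.union hbounded).of_isClosed_subset
    (isClosed_closure_union_boundedPart_compl C)
    (union_subset subset_union_left (hsub.trans (union_subset_union_right _ subset_closure)))

end LocallyConnectedSpace

end

theorem compact_union_bounded_components_general {X : Type*} [TopologicalSpace X]
    [PreconnectedSpace X] [WeaklyLocallyCompactSpace X] [LocallyConnectedSpace X] [R1Space X]
    {C : Set X} (hC : IsCompact C) :
    IsCompact (C ∪ {x | x ∈ Cᶜ ∧ IsCompact (closure (connectedComponentIn Cᶜ x))}) :=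
  isCompact_union_of_isCompact_closure_union hC (isCompact_closure_union_boundedPart_compl hC)

/-- First assertion of Theorem 2.4 (ES): in a connected, locally compact, locally connected
Hausdorff space `X`, for any compact `C ⊆ X` the union of `C` with all connected components
of `X \ C` having compact closure is compact. -/
theorem compact_union_bounded_components {X : Type*} [TopologicalSpace X]
    [ConnectedSpace X] [LocallyCompactSpace X] [LocallyConnectedSpace X] [T2Space X]
    {C : Set X} (hC : IsCompact C) :
    IsCompact (C ∪ {x | x ∈ Cᶜ ∧ IsCompact (closure (connectedComponentIn Cᶜ x))}) :=
  compact_union_bounded_components_general hC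
end

section
/- Let X be a connected, locally compact, locally connected Hausdorff topological space and let C ⊆ X be compact. Then only finitely many connected components of X \ C fail to have compact closure; that is, the set of connected components of X \ C whose closure is not compact is finite. -/
/-!
Choose an open `U ⊇ closure C` with compact closure. A component of `X \ C` disjoint from `U` is
clopen, hence all of `X`; a component contained in `U` has compact closure; and any other component
meets the frontier of `U`. This frontier is compact and covered by the components of `X \ C`, each
of which is a neighbourhood of its points there, so only finitely many components meet it.
-/

open Set

theorem inter_frontier_nonempty_of_isPreconnected_s4 {X : Type*} [TopologicalSpace X] {D K : Set X}
    (hD : IsPreconnected D) (hDK : (D ∩ K).Nonempty) (hDK' : ¬ D ⊆ K) :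
    (D ∩ frontier K).Nonempty := by
  by_contra hfr
  have mem_interior : ∀ x ∈ D, x ∈ closure K → x ∈ interior K := fun x hxD hxK ↦
    by_contra fun hx ↦ hfr ⟨x, hxD, hxK, hx⟩
  obtain ⟨x, hxD, hxK⟩ := hDK
  have hsub : D ⊆ interior K :=
    hD.subset_of_closure_inter_subset isOpen_interior
      ⟨x, hxD, mem_interior x hxD (subset_closure hxK)⟩
      fun y ⟨hyK, hyD⟩ ↦ mem_interior y hyD (closure_mono interior_subset hyK)
  exact hDK' (hsub.trans interior_subset)

section LocallyConnected

variable {X : Type*} [TopologicalSpace X] [LocallyConnectedSpace X]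

theorem isClopen_connectedComponentIn_of_closure_subset_interior {F : Set X} {x : X}
    (h : closure (connectedComponentIn F x) ⊆ interior F) :
    IsClopen (connectedComponentIn F x) := by
  constructor
  · refine isClosed_of_closure_subset fun y hy ↦ ?_
    have hxF : x ∈ F := connectedComponentIn_nonempty_iff.1 (closure_nonempty_iff.1 ⟨y, hy⟩)
    exact isPreconnected_connectedComponentIn.closure.subset_connectedComponentIn
      (subset_closure (mem_connectedComponentIn hxF)) (h.trans interior_subset) hy
  · refine isOpen_iff_mem_nhds.2 fun y hy ↦ ?_
    rw [connectedComponentIn_eq hy]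
    exact connectedComponentIn_mem_nhds (mem_interior_iff_mem_nhds.1 (h (subset_closure hy)))

theorem finite_image_connectedComponentIn_of_isCompact {F L : Set X} (hL : IsCompact L)
    (hLF : L ⊆ interior F) : (connectedComponentIn F '' L).Finite := by
  obtain ⟨t, -, ht⟩ := hL.elim_nhds_subcover (connectedComponentIn F) fun x hx ↦
    connectedComponentIn_mem_nhds (mem_interior_iff_mem_nhds.1 (hLF hx))
  refine (t.finite_toSet.image (connectedComponentIn F)).subset ?_
  rintro _ ⟨y, hy, rfl⟩
  obtain ⟨z, hz, hyz⟩ := mem_iUnion₂.1 (ht hy)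
  exact ⟨z, hz, connectedComponentIn_eq hyz⟩

variable [PreconnectedSpace X] {C K : Set X}

theorem connectedComponentIn_compl_eq_univ_of_disjoint (hCK : closure C ⊆ interior K) {x : X}
    (hx : x ∈ Cᶜ) (hdisj : Disjoint (connectedComponentIn Cᶜ x) K) :
    connectedComponentIn Cᶜ x = univ := by
  refine (isClopen_connectedComponentIn_of_closure_subset_interior ?_).eq_univ
    ⟨x, mem_connectedComponentIn hx⟩
  calc closure (connectedComponentIn Cᶜ x) ⊆ closure Kᶜ := closure_mono hdisj.subset_compl_right
    _ = (interior K)ᶜ := closure_compl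
    _ ⊆ (closure C)ᶜ := compl_subset_compl.2 hCK
    _ = interior Cᶜ := interior_compl.symm

theorem finite_connectedComponentIn_compl_not_subset (hCK : closure C ⊆ interior K)
    (hK : IsCompact (frontier K)) :
    {D : Set X | (∃ x ∈ Cᶜ, D = connectedComponentIn Cᶜ x) ∧ ¬ D ⊆ K}.Finite := by
  have hfr : frontier K ⊆ interior Cᶜ := by
    rw [interior_compl]
    exact fun y hy hyC ↦ hy.2 (hCK hyC)
  refine ((finite_image_connectedComponentIn_of_isCompact hK hfr).insert univ).subset ?_
  rintro _ ⟨⟨x, hx, rfl⟩, hDK⟩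
  rcases disjoint_or_nonempty_inter (connectedComponentIn Cᶜ x) K with hdisj | hmeet
  · exact Or.inl (connectedComponentIn_compl_eq_univ_of_disjoint hCK hx hdisj)
  · obtain ⟨y, hyD, hyK⟩ :=
      inter_frontier_nonempty_of_isPreconnected_s4 isPreconnected_connectedComponentIn hmeet hDK
    exact Or.inr ⟨y, hyK, (connectedComponentIn_eq hyD).symm⟩

end LocallyConnected

theorem finitely_many_unbounded_components_general {X : Type*} [TopologicalSpace X]
    [PreconnectedSpace X] [WeaklyLocallyCompactSpace X] [LocallyConnectedSpace X] [R1Space X]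
    {C : Set X} (hC : IsCompact (closure C)) :
    {D : Set X | (∃ x ∈ Cᶜ, D = connectedComponentIn Cᶜ x) ∧
      ¬ IsCompact (closure D)}.Finite := by
  obtain ⟨U, hU, hCU, hUc⟩ := exists_isOpen_superset_and_isCompact_closure hC
  have hfr : IsCompact (frontier U) :=
    hUc.of_isClosed_subset isClosed_frontier frontier_subset_closure
  refine (finite_connectedComponentIn_compl_not_subset (hU.interior_eq.symm ▸ hCU) hfr).subset ?_
  exact fun D hD ↦ ⟨hD.1, fun hDU ↦ hD.2 (hUc.closure_of_subset (hDU.trans subset_closure))⟩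

/-- Second assertion of Theorem 2.4 (ES): in a connected, locally compact, locally connected
Hausdorff space `X`, for any compact `C ⊆ X` only finitely many connected components of
`X \ C` have noncompact closure. -/
theorem finitely_many_unbounded_components {X : Type*} [TopologicalSpace X]
    [ConnectedSpace X] [LocallyCompactSpace X] [LocallyConnectedSpace X] [T2Space X]
    {C : Set X} (hC : IsCompact C) :
    {D : Set X | (∃ x ∈ Cᶜ, D = connectedComponentIn Cᶜ x) ∧
      ¬ IsCompact (closure D)}.Finite :=
  finitely_many_unbounded_components_general hC.closure
end

section
/- Let X be a connected, locally compact, locally connected Hausdorff topological space and let C ⊆ X be compact. Then there exists a compact set D with C ⊆ D ⊆ X such that every connected component of X \ D has noncompact closure. -/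
/-!
Fill in the holes of `C`: add to `C` every component of its complement with compact closure. The
other components of `Cᶜ` are then exactly the components of the new complement, so only the
compactness of the filled set is at issue. Take an open neighbourhood `V` of `C` with compact
closure. By connectedness of the space, a component of `Cᶜ` with compact closure has a frontier
point in `C` (unless the whole space is compact), so it meets `V`, and if it is not contained in
`V` it meets the compact set `frontier V`. As the components of `Cᶜ` are open and disjoint, only
finitely many of them meet `frontier V`.
-/

open Set

section Components

variable {X : Type*} [TopologicalSpace X] {s t C U V K : Set X} {x : X}

theorem inter_frontier_nonempty_of_isPreconnected_s5 (hs : IsPreconnected s)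
    (hst : (s ∩ t).Nonempty) (hst' : (s ∩ tᶜ).Nonempty) : (s ∩ frontier t).Nonempty := by
  by_contra hdisj
  have mem_interior {y : X} (hys : y ∈ s) (hyt : y ∈ closure t) : y ∈ interior t :=
    by_contra fun hy ↦ hdisj ⟨y, hys, hyt, hy⟩
  obtain ⟨y, hys, hyt⟩ := hst
  have hs_interior : s ⊆ interior t :=
    hs.subset_of_closure_inter_subset isOpen_interior
      ⟨y, hys, mem_interior hys (subset_closure hyt)⟩
      fun z hz ↦ mem_interior hz.2 (closure_mono interior_subset hz.1)
  obtain ⟨z, hzs, hzt⟩ := hst'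
  exact hzt (interior_subset (hs_interior hzs))

theorem closure_connectedComponentIn_inter_subset :
    closure (connectedComponentIn U x) ∩ U ⊆ connectedComponentIn U x := by
  by_cases hx : x ∈ U
  · have hpre : IsPreconnected (closure (connectedComponentIn U x) ∩ U) :=
      isPreconnected_connectedComponentIn.subset_closure
        (subset_inter subset_closure (connectedComponentIn_subset U x)) inter_subset_left
    exact hpre.subset_connectedComponentIn
      ⟨subset_closure (mem_connectedComponentIn hx), hx⟩ inter_subset_right
  · simp [connectedComponentIn_eq_empty hx]

theorem frontier_connectedComponentIn_subset_compl [LocallyConnectedSpace X] (hU : IsOpen U) :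
    frontier (connectedComponentIn U x) ⊆ Uᶜ := by
  rw [hU.connectedComponentIn.frontier_eq]
  exact fun _ hy hyU ↦ hy.2 (closure_connectedComponentIn_inter_subset ⟨hy.1, hyU⟩)

theorem finite_image_connectedComponentIn [LocallyConnectedSpace X] (hU : IsOpen U)
    (hK : IsCompact K) (hKU : K ⊆ U) : (connectedComponentIn U '' K).Finite := by
  obtain ⟨t, -, hKt⟩ := hK.elim_nhds_subcover (connectedComponentIn U) fun x hx ↦
    connectedComponentIn_mem_nhds (hU.mem_nhds (hKU hx))
  refine (t.finite_toSet.image (connectedComponentIn U)).subset ?_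
  rintro _ ⟨x, hx, rfl⟩
  obtain ⟨y, hyt, hxy⟩ := mem_iUnion₂.1 (hKt hx)
  exact ⟨y, hyt, connectedComponentIn_eq hxy⟩

theorem connectedComponentIn_compl_inter_frontier_nonempty [PreconnectedSpace X]
    [LocallyConnectedSpace X] (hC : IsClosed C) (hV : IsOpen V) (hCV : C ⊆ V) (hx : x ∉ V)
    (hne : connectedComponentIn Cᶜ x ≠ univ) :
    (connectedComponentIn Cᶜ x ∩ frontier V).Nonempty := by
  have hx_mem : x ∈ connectedComponentIn Cᶜ x := mem_connectedComponentIn fun hxC ↦ hx (hCV hxC)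
  obtain ⟨c, hc⟩ : (frontier (connectedComponentIn Cᶜ x)).Nonempty :=
    nonempty_frontier_iff.2 ⟨⟨x, hx_mem⟩, hne⟩
  have hcC : c ∈ C :=
    notMem_compl_iff.1 (frontier_connectedComponentIn_subset_compl hC.isOpen_compl hc)
  have hmeets : (connectedComponentIn Cᶜ x ∩ V).Nonempty := by
    rw [inter_comm]
    exact mem_closure_iff.1 (frontier_subset_closure hc) V hV (hCV hcC)
  exact inter_frontier_nonempty_of_isPreconnected_s5 isPreconnected_connectedComponentIn hmeets
    ⟨x, hx_mem, hx⟩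

end Components

section FillHoles

variable {X : Type*} [TopologicalSpace X] {C : Set X} {x : X}

/-- The set `C` with its holes filled in: the union of `C` and the connected components of `Cᶜ`
with compact closure. The points of `C` are included because `connectedComponentIn Cᶜ x = ∅` when
`x ∉ Cᶜ`. -/
def fillHoles (C : Set X) : Set X :=
  {x | IsCompact (closure (connectedComponentIn Cᶜ x))}

theorem mem_fillHoles : x ∈ fillHoles C ↔ IsCompact (closure (connectedComponentIn Cᶜ x)) :=
  Iff.rfl

theorem subset_fillHoles : C ⊆ fillHoles C := fun x hx ↦ by
  simp [mem_fillHoles, connectedComponentIn_eq_empty (notMem_compl_iff.2 hx)]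

theorem connectedComponentIn_subset_compl_fillHoles (hx : x ∉ fillHoles C) :
    connectedComponentIn Cᶜ x ⊆ (fillHoles C)ᶜ := fun y hy hy_fill ↦ by
  rw [mem_fillHoles, ← connectedComponentIn_eq hy] at hy_fill
  exact hx hy_fill

theorem connectedComponentIn_compl_fillHoles (hx : x ∉ fillHoles C) :
    connectedComponentIn (fillHoles C)ᶜ x = connectedComponentIn Cᶜ x :=
  (connectedComponentIn_mono x (compl_subset_compl.2 subset_fillHoles)).antisymm <|
    isPreconnected_connectedComponentIn.subset_connectedComponentIn
      (mem_connectedComponentIn fun hxC ↦ hx (subset_fillHoles hxC))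
      (connectedComponentIn_subset_compl_fillHoles hx)

theorem isClosed_fillHoles [LocallyConnectedSpace X] (hC : IsClosed C) :
    IsClosed (fillHoles C) := by
  refine isOpen_compl_iff.1 (isOpen_iff_mem_nhds.2 fun x hx ↦ ?_)
  have hxC : x ∈ Cᶜ := fun hxC ↦ hx (subset_fillHoles hxC)
  exact Filter.mem_of_superset (connectedComponentIn_mem_nhds (hC.isOpen_compl.mem_nhds hxC))
    (connectedComponentIn_subset_compl_fillHoles hx)

theorem fillHoles_subset_closure_union [PreconnectedSpace X] [NoncompactSpace X]
    [LocallyConnectedSpace X] {V : Set X} (hC : IsClosed C) (hV : IsOpen V) (hCV : C ⊆ V) :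
    fillHoles C ⊆ closure V ∪
      ⋃ A ∈ {A ∈ connectedComponentIn Cᶜ '' frontier V | IsCompact (closure A)}, closure A := by
  intro x hx
  by_cases hxV : x ∈ V
  · exact .inl (subset_closure hxV)
  have hne : connectedComponentIn Cᶜ x ≠ univ := fun h ↦ hx.ne_univ (by rw [h, closure_univ])
  obtain ⟨y, hyx, hy⟩ :=
    connectedComponentIn_compl_inter_frontier_nonempty hC hV hCV hxV hne
  refine .inr (mem_biUnion ⟨⟨y, hy, (connectedComponentIn_eq hyx).symm⟩, hx⟩ ?_)
  exact subset_closure (mem_connectedComponentIn fun hxC ↦ hxV (hCV hxC))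

theorem isCompact_fillHoles [PreconnectedSpace X] [WeaklyLocallyCompactSpace X]
    [LocallyConnectedSpace X] [R1Space X] (hC : IsCompact C) (hC_closed : IsClosed C) :
    IsCompact (fillHoles C) := by
  by_cases hX : CompactSpace X
  · exact (isClosed_fillHoles hC_closed).isCompact
  have : NoncompactSpace X := not_compactSpace_iff.1 hX
  obtain ⟨V, hV, hCV, hV_compact⟩ := exists_isOpen_superset_and_isCompact_closure hC
  have hfrontier : frontier V ⊆ Cᶜ := fun y hy hyC ↦
    (hV.frontier_eq ▸ hy).2 (hCV hyC)
  have hfinite : (connectedComponentIn Cᶜ '' frontier V).Finite :=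
    finite_image_connectedComponentIn hC_closed.isOpen_compl
      (hV_compact.of_isClosed_subset isClosed_frontier frontier_subset_closure) hfrontier
  exact (hV_compact.union ((hfinite.sep _).isCompact_biUnion fun _ hA ↦ hA.2)).of_isClosed_subset
    (isClosed_fillHoles hC_closed) (fillHoles_subset_closure_union hC_closed hV hCV)

end FillHoles

theorem exists_compact_superset_all_components_unbounded_general {X : Type*} [TopologicalSpace X]
    [PreconnectedSpace X] [WeaklyLocallyCompactSpace X] [LocallyConnectedSpace X] [R1Space X]
    {C : Set X} (hC : IsCompact C) :
    ∃ D : Set X, IsCompact D ∧ C ⊆ D ∧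
      ∀ x ∈ Dᶜ, ¬ IsCompact (closure (connectedComponentIn Dᶜ x)) := by
  refine ⟨fillHoles (closure C), isCompact_fillHoles hC.closure isClosed_closure,
    subset_closure.trans subset_fillHoles, fun x hx ↦ ?_⟩
  rwa [connectedComponentIn_compl_fillHoles hx]

/-- Corollary of Theorem 2.4 (ES): in a connected, locally compact, locally connected Hausdorff
space `X`, every compact set `C` is contained in a compact set `D` all of whose complementary
connected components have noncompact closure. -/
theorem exists_compact_superset_all_components_unbounded {X : Type*} [TopologicalSpace X]
    [ConnectedSpace X] [LocallyCompactSpace X] [LocallyConnectedSpace X] [T2Space X]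
    {C : Set X} (hC : IsCompact C) :
    ∃ D : Set X, IsCompact D ∧ C ⊆ D ∧
      ∀ x ∈ Dᶜ, ¬ IsCompact (closure (connectedComponentIn Dᶜ x)) :=
  exists_compact_superset_all_components_unbounded_general hC
end

section
/- Let W and L be types and let deg : W → L → ℕ be any function. Then at least one of the following holds: (i) there exist injective sequences w : ℕ → W and l : ℕ → L such that deg (w j) (l j) ≥ j for every j ∈ ℕ; or (ii) there exist finite sets S ⊆ W and T ⊆ L and a natural number N such that deg x y < N for all x ∈ W \ S and y ∈ L \ T. -/
/-!
If no finite sets `S`, `T` and level `j` witness the second alternative, then for every `j` and all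
finite `S`, `T` some pair outside `S` and `T` is related at level `j`. Hence the pairs `(w j, l j)`
can be picked one after another, each avoiding both coordinates of all earlier pairs.
-/

theorem exists_seq_of_forall_nat_finset_exists {α : Type*} (P : ℕ → α → Prop) (r : α → α → Prop)
    (h : ∀ (n : ℕ) (s : Finset α), ∃ y, P n y ∧ ∀ x ∈ s, r x y) :
    ∃ f : ℕ → α, (∀ n, P n (f n)) ∧ ∀ m n, m < n → r (f m) (f n) := by
  classical
  -- A sequence of whole candidate sequences is built by the unindexed lemma; its diagonal is `f`.
  -- Asking only for `i < j` leaves finitely many elements to avoid at each index `j`.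
  obtain ⟨F, hP, hr⟩ : ∃ F : ℕ → ℕ → α, (∀ k n, P n (F k n)) ∧
      ∀ k l, k < l → ∀ i j, i < j → r (F k i) (F l j) := by
    refine exists_seq_of_forall_finset_exists (fun g : ℕ → α ↦ ∀ n, P n (g n))
      (fun g g' ↦ ∀ i j, i < j → r (g i) (g' j)) fun s _ ↦ ?_
    choose y hPy hry using fun n ↦ h n (s.biUnion fun g ↦ (Finset.range n).image g)
    refine ⟨y, hPy, fun g hg i j hij ↦ hry j (g i) ?_⟩
    exact Finset.mem_biUnion.mpr ⟨g, hg, Finset.mem_image_of_mem g (Finset.mem_range.mpr hij)⟩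
  exact ⟨fun n ↦ F n n, fun n ↦ hP n n, fun m n hmn ↦ hr m n hmn m n hmn⟩

theorem deg_dichotomy_general {W L : Type*} (R : ℕ → W → L → Prop) :
    (∃ w : ℕ → W, ∃ l : ℕ → L, Function.Injective w ∧ Function.Injective l ∧
      ∀ j, R j (w j) (l j)) ∨
    (∃ S : Finset W, ∃ T : Finset L, ∃ j, ∀ x ∉ S, ∀ y ∉ T, ¬ R j x y) := by
  classical
  refine or_iff_not_imp_right.mpr fun hfin ↦ ?_
  push Not at hfin
  have exists_avoiding (j : ℕ) (s : Finset (W × L)) :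
      ∃ q : W × L, R j q.1 q.2 ∧ ∀ p ∈ s, p.1 ≠ q.1 ∧ p.2 ≠ q.2 := by
    obtain ⟨x, hx, y, hy, hxy⟩ := hfin (s.image Prod.fst) (s.image Prod.snd) j
    exact ⟨(x, y), hxy, fun p hp ↦ ⟨ne_of_mem_of_not_mem (Finset.mem_image_of_mem _ hp) hx,
      ne_of_mem_of_not_mem (Finset.mem_image_of_mem _ hp) hy⟩⟩
  obtain ⟨f, hR, hne⟩ := exists_seq_of_forall_nat_finset_exists
    (fun j (q : W × L) ↦ R j q.1 q.2) (fun p q ↦ p.1 ≠ q.1 ∧ p.2 ≠ q.2) exists_avoiding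
  exact ⟨fun j ↦ (f j).1, fun j ↦ (f j).2, .of_lt_imp_ne fun i j hij ↦ (hne i j hij).1,
    .of_lt_imp_ne fun i j hij ↦ (hne i j hij).2, hR⟩

/-- Abstract content of Lemma 4.10 (Like4.4): for any `deg : W → L → ℕ`, either there are
injective sequences `w : ℕ → W`, `l : ℕ → L` with `deg (w j) (l j) ≥ j` for all `j`, or
there are finite sets `S ⊆ W`, `T ⊆ L` and a bound `N` with `deg x y < N` whenever
`x ∉ S` and `y ∉ T`. -/
theorem deg_dichotomy {W L : Type*} (deg : W → L → ℕ) :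
    (∃ w : ℕ → W, ∃ l : ℕ → L, Function.Injective w ∧ Function.Injective l ∧
      ∀ j : ℕ, j ≤ deg (w j) (l j)) ∨
    (∃ S : Finset W, ∃ T : Finset L, ∃ N : ℕ,
      ∀ x : W, x ∉ S → ∀ y : L, y ∉ T → deg x y < N) := by
  simpa only [not_le] using deg_dichotomy_general fun j x y ↦ j ≤ deg x y
end

section
/- Let H be a group, A and B subgroups of H, and φ : A ≃ B an isomorphism, and let G = HNNExtension H A B φ with canonical map of : H → G and stable letter t (so that t·of(a)·t⁻¹ = of(φ(a)) for all a ∈ A). Then for every h ∈ H, if t · of(h) · t⁻¹ lies in the range of of, then h ∈ A. -/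
/-!
By Britton's lemma, a word of the form `tᵘ g tᵛ` with `u, v = ±1` that represents an element of the
base group is not reduced. It has only one place to fail: the signs are opposite and `g` lies
in the associated subgroup that `tᵘ` conjugates into the base group, which is `A` for `u = 1`.
-/

open HNNExtension

section Pinch

variable {H : Type*} [Group H] {A B : Subgroup H} {φ : A ≃* B} {u v : ℤˣ} {g : H}

theorem mem_toSubgroup_and_eq_neg_of_t_zpow_mul_of_mul_t_zpow_mem_range
    (hmem : t ^ (u : ℤ) * of g * t ^ (v : ℤ) ∈ (of : H →* HNNExtension H A B φ).range) :
    g ∈ toSubgroup A B u ∧ u = -v := by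
  rw [← Int.units_ne_iff_eq_neg]
  by_contra hpinch
  have hreduced : g ∈ toSubgroup A B u → u = v := by simpa using hpinch
  let w : NormalWord.ReducedWord H A B :=
    { head := 1, toList := [(u, g), (v, 1)], chain := by simpa using hreduced }
  have hprod : w.prod φ = t ^ (u : ℤ) * of g * t ^ (v : ℤ) := by
    simp [w, NormalWord.ReducedWord.prod, mul_assoc]
  have hnil : w.toList = [] :=
    ReducedWord.toList_eq_nil_of_mem_of_range φ w (hprod ▸ hmem)
  exact List.cons_ne_nil _ _ hnil

end Pinch

/-- Consequence of Britton's lemma (algebraic core of Lemma 4.3 (smallmove)): in an HNN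
extension `HNNExtension H A B φ`, if `t * of h * t⁻¹` lies in the image of the base group,
then `h ∈ A`. -/
theorem hnn_conj_mem_base_imp_mem {H : Type*} [Group H] (A B : Subgroup H) (φ : A ≃* B)
    (h : H)
    (hmem : t * (of h : HNNExtension H A B φ) * t⁻¹ ∈
      (of : H →* HNNExtension H A B φ).range) :
    h ∈ A := by
  have hpinch : h ∈ toSubgroup A B 1 ∧ (1 : ℤˣ) = -(-1) :=
    mem_toSubgroup_and_eq_neg_of_t_zpow_mul_of_mul_t_zpow_mem_range (φ := φ) (by simpa using hmem)
  exact hpinch.1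
end

section
/- Let Γ be a connected, locally finite, infinite simple graph. Then Γ has exactly one end (its end space is a singleton) if and only if for every finite set K of vertices there exists a finite set K' of vertices with K ⊆ K' such that any two vertices outside K' can be joined by a walk in Γ none of whose vertices lies in K. -/
/-- A simple graph has exactly one end. -/
def IsOneEnded {V : Type*} (Γ : SimpleGraph V) : Prop :=
  Γ.end.Nonempty ∧ Γ.end.Subsingleton

/-!
Both conditions say that the complement of every finite set `K` has a component `C` with finite
complement. Given such a `C`, the set `K' = Cᶜ` works in the connectivity condition; conversely the
component of any vertex outside `K'` is such a `C`. An end picks an infinite component outside each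
`K`, so these cofinite components, being the only infinite ones, form the unique end. In the other
direction, if each `K` leaves only finitely many components, a compactness (Mittag-Leffler) argument
extends every infinite component to an end, so in a one-ended graph all components but one are
finite, and the remaining one is cofinite.
-/

section

open CategoryTheory Opposite SimpleGraph

variable {V : Type*} {Γ : SimpleGraph V}

theorem componentComplMk_eq_iff_exists_walk {K : Set V} {v w : V} (hv : v ∉ K) (hw : w ∉ K) :
    Γ.componentComplMk hv = Γ.componentComplMk hw ↔
      ∃ p : Γ.Walk v w, ∀ x ∈ p.support, x ∉ K := by
  rw [ConnectedComponent.eq]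
  constructor
  · rintro ⟨p⟩
    refine ⟨p.map (Embedding.induce Kᶜ).toHom, fun x hx ↦ ?_⟩
    obtain ⟨y, -, rfl⟩ := List.mem_map.1 (Walk.support_map _ p ▸ hx)
    exact y.2
  · rintro ⟨p, hp⟩
    exact ⟨p.induce Kᶜ hp⟩

theorem exists_componentCompl_compl_finite_iff_exists_walk [Infinite V] {K : Set V} :
    (∃ C : Γ.ComponentCompl K, (C : Set V)ᶜ.Finite) ↔
      ∃ K' : Set V, K'.Finite ∧ K ⊆ K' ∧
        ∀ v ∉ K', ∀ w ∉ K', ∃ p : Γ.Walk v w, ∀ x ∈ p.support, x ∉ K := by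
  constructor
  · rintro ⟨C, hC⟩
    refine ⟨(C : Set V)ᶜ, hC, C.disjoint_right.subset_compl_right, fun v hv w hw ↦ ?_⟩
    obtain ⟨hvK, hvC⟩ := Set.notMem_compl_iff.1 hv
    obtain ⟨hwK, hwC⟩ := Set.notMem_compl_iff.1 hw
    exact (componentComplMk_eq_iff_exists_walk hvK hwK).1 (hvC.trans hwC.symm)
  · rintro ⟨K', hK', hKK', hwalk⟩
    obtain ⟨v, hv⟩ := hK'.exists_notMem
    refine ⟨Γ.componentComplMk (Set.notMem_subset hKK' hv),
      hK'.subset (Set.compl_subset_comm.1 fun w hw ↦ ?_)⟩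
    have hwK : w ∉ K := Set.notMem_subset hKK' hw
    exact ⟨hwK, (componentComplMk_eq_iff_exists_walk hwK _).2 (hwalk w hw v hv)⟩

theorem componentCompl_eq_of_compl_finite_of_infinite {K : Set V} {C D : Γ.ComponentCompl K}
    (hC : (C : Set V)ᶜ.Finite) (hD : (D : Set V).Infinite) : D = C := by
  by_contra hDC
  exact hD (hC.subset (ComponentCompl.pairwise_disjoint hDC).subset_compl_right)

theorem finite_componentCompl_of_compl_finite {K : Set V} {C : Γ.ComponentCompl K}
    (hC : (C : Set V)ᶜ.Finite) : Finite (Γ.ComponentCompl K) := by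
  have hne : {D : Γ.ComponentCompl K | D ≠ C}.Finite := by
    refine .of_finite_image (hC.finite_subsets.subset ?_) SetLike.coe_injective.injOn
    rintro _ ⟨D, hDC, rfl⟩
    exact (ComponentCompl.pairwise_disjoint hDC).subset_compl_right
  exact Set.finite_univ_iff.1 ((hne.insert C).subset fun D _ ↦ Classical.em (D = C))

theorem componentCompl_compl_finite_of_forall_ne {K : Set V} (hK : K.Finite)
    [Finite (Γ.ComponentCompl K)] {C : Γ.ComponentCompl K}
    (hC : ∀ D : Γ.ComponentCompl K, D ≠ C → (D : Set V).Finite) : (C : Set V)ᶜ.Finite := by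
  have hne : (⋃ D ∈ {D : Γ.ComponentCompl K | D ≠ C}, (D : Set V)).Finite :=
    (Set.toFinite _).biUnion hC
  refine (hK.union hne).subset fun v hvC ↦ or_iff_not_imp_left.2 fun hvK ↦ ?_
  exact Set.mem_biUnion (x := Γ.componentComplMk hvK) (fun h ↦ hvC ⟨hvK, h⟩)
    (Γ.componentComplMk_mem hvK)

theorem infinite_of_mem_end {s : ∀ K, Γ.componentComplFunctor.obj K} (hs : s ∈ Γ.end)
    (K : Finset V) : (ComponentCompl.supp (s (op K))).Infinite :=
  (ComponentCompl.infinite_iff_in_all_ranges _).2 fun L hKL ↦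
    ⟨s (op L), hs (opHomOfLE hKL)⟩

theorem exists_mem_end_apply_eq_of_infinite [∀ K : Finset V, Finite (Γ.ComponentCompl K)]
    {K : Finset V} {C : Γ.ComponentCompl K} (hC : (C : Set V).Infinite) :
    ∃ s ∈ Γ.end, s (op K) = C := by
  let F := Γ.componentComplFunctor
  have : Infinite V := Set.infinite_univ_iff.1 (hC.mono (Set.subset_univ _))
  have (L : (Finset V)ᵒᵖ) : Finite (F.obj L) := inferInstanceAs (Finite (Γ.ComponentCompl _))
  have (L : (Finset V)ᵒᵖ) : Nonempty (F.obj L) := Γ.componentCompl_nonempty_of_infinite L.unop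
  have hF : F.IsMittagLeffler :=
    F.isMittagLeffler_of_exists_finite_range fun L ↦ ⟨L, 𝟙 L, Set.toFinite _⟩
  have := F.toEventualRanges_nonempty hF
  obtain ⟨s, hs⟩ := F.toEventualRanges.eval_section_surjective_of_surjective
    (F.surjective_toEventualRanges hF) (op K) ⟨C, (Γ.infinite_iff_in_eventualRange C).1 hC⟩
  exact ⟨_, (F.toEventualRangesSectionsEquiv s).2, congrArg Subtype.val hs⟩

theorem IsOneEnded.exists_componentCompl_compl_finite (h : IsOneEnded Γ)
    [∀ K : Finset V, Finite (Γ.ComponentCompl K)] (K : Finset V) :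
    ∃ C : Γ.ComponentCompl K, (C : Set V)ᶜ.Finite := by
  obtain ⟨⟨s, hs⟩, hsub⟩ := h
  refine ⟨s (op K), componentCompl_compl_finite_of_forall_ne K.finite_toSet fun D hD ↦ ?_⟩
  by_contra hDinf
  obtain ⟨t, ht, rfl⟩ := exists_mem_end_apply_eq_of_infinite hDinf
  exact hD (congrFun (hsub ht hs) (op K))

theorem isOneEnded_of_forall_exists_componentCompl_compl_finite
    (h : ∀ K : Finset V, ∃ C : Γ.ComponentCompl K, (C : Set V)ᶜ.Finite) : IsOneEnded Γ := by
  choose C hC using h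
  have (K : (Finset V)ᵒᵖ) : Finite (Γ.componentComplFunctor.obj K) :=
    finite_componentCompl_of_compl_finite (hC K.unop)
  have (K : (Finset V)ᵒᵖ) : Nonempty (Γ.componentComplFunctor.obj K) := ⟨C K.unop⟩
  have eq_C {s} (hs : s ∈ Γ.end) (K : (Finset V)ᵒᵖ) : s K = C K.unop :=
    componentCompl_eq_of_compl_finite_of_infinite (hC K.unop) (infinite_of_mem_end hs K.unop)
  exact ⟨nonempty_sections_of_finite_inverse_system Γ.componentComplFunctor,
    fun s hs t ht ↦ funext fun K ↦ (eq_C hs K).trans (eq_C ht K).symm⟩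

end

theorem oneEnded_iff_connectivity_outside_general {V : Type*} [Infinite V] (Γ : SimpleGraph V) :
    (IsOneEnded Γ ∧ ∀ K : Finset V, Finite (Γ.ComponentCompl K)) ↔
      ∀ K : Set V, K.Finite → ∃ K' : Set V, K'.Finite ∧ K ⊆ K' ∧
        ∀ v ∉ K', ∀ w ∉ K', ∃ p : Γ.Walk v w, ∀ x ∈ p.support, x ∉ K := by
  simp only [← exists_componentCompl_compl_finite_iff_exists_walk]
  constructor
  · rintro ⟨hΓ, hfin⟩ K hK
    lift K to Finset V using hK
    exact hΓ.exists_componentCompl_compl_finite K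
  · intro h
    have hcofinite (K : Finset V) := h K K.finite_toSet
    exact ⟨isOneEnded_of_forall_exists_componentCompl_compl_finite hcofinite, fun K ↦
      let ⟨_, hC⟩ := hcofinite K
      finite_componentCompl_of_compl_finite hC⟩

/-- Characterization of one-endedness for connected, locally finite, infinite graphs:
`Γ` is one-ended iff for every finite vertex set `K` there is a finite `K' ⊇ K` such that
any two vertices outside `K'` can be joined by a walk avoiding `K`. -/
theorem oneEnded_iff_connectivity_outside {V : Type*} [Infinite V]
    (Γ : SimpleGraph V) (hconn : Γ.Connected)
    (hlf : ∀ v : V, (Γ.neighborSet v).Finite) :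
    IsOneEnded Γ ↔
      ∀ K : Set V, K.Finite → ∃ K' : Set V, K'.Finite ∧ K ⊆ K' ∧
        ∀ v ∉ K', ∀ w ∉ K', ∃ p : Γ.Walk v w, ∀ x ∈ p.support, x ∉ K := by
  have : Γ.LocallyFinite := fun v ↦ (hlf v).fintype
  have : Fact Γ.Preconnected := ⟨hconn.preconnected⟩
  exact (and_iff_left Γ.componentCompl_finite).symm.trans
    (oneEnded_iff_connectivity_outside_general Γ)
end
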